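/- arXiv:1312.7729 — 2 statements merged into one kernel-verified Lean document; each statement's English description precedes it below -/
import Mathlib

section
/- For every nonnegative integer n, odd positive integers a and b, real q with 0<q<1, real x, a positive integer r, and a Dirichlet character χ of odd conductor d: Σ_{j_1,...,j_r=0}^{da-1} (-1)^{j_1+⋯+j_r} q^{b(j_1+⋯+j_r)} (Π_{l=1}^r χ(j_l)) E^{(r)}_{n,χ,q^a}(bx + (b/a)(j_1+⋯+j_r)) = Σ_{i=0}^{n} C(n,i) ([b]_q/[a]_q)^{i} E^{(r)}_{n-i,χ,q^a}(bx) S^{(r)}_{n,i,q^b}(ad|χ), where C(n,i) is the binomial coefficient. -/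
open scoped BigOperators

/-- The `q`-number `[x]_q = (1 - q^x)/(1 - q)` for real `q` and real `x`. -/
noncomputable def qNum (q x : ℝ) : ℝ := (1 - q ^ x) / (1 - q)

/-- Generalized `q`-Euler polynomial of order `r` attached to a Dirichlet character `χ`:
`E^{(r)}_{n,χ,q}(x) = [2]_q^r Σ' (-q)^{m₁+⋯+m_r} (Π χ(mᵢ)) [m₁+⋯+m_r+x]_q^n`. -/
noncomputable def qEuler (r : ℕ) {d : ℕ} (χ : DirichletCharacter ℂ d) (q : ℝ)
    (n : ℕ) (x : ℝ) : ℂ :=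
  ((qNum q 2 : ℝ) : ℂ) ^ r *
    ∑' m : Fin r → ℕ,
      ((-(q : ℂ)) ^ (∑ i, m i) * (∏ i, χ ((m i : ZMod d))) *
        ((qNum q ((∑ i, m i : ℕ) + x) : ℝ) : ℂ) ^ n)

/-- Dirichlet-type multiple `q`-`l`-function
`l_{q,r}(s,x|χ) = [2]_q^r Σ' (-q)^{m₁+⋯+m_r} (Π χ(mᵢ)) [m₁+⋯+m_r+x]_q^{-s}`,
with principal complex powers of positive real bases. -/
noncomputable def qL (q : ℝ) (r : ℕ) {d : ℕ} (χ : DirichletCharacter ℂ d)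
    (s : ℂ) (x : ℝ) : ℂ :=
  ((qNum q 2 : ℝ) : ℂ) ^ r *
    ∑' m : Fin r → ℕ,
      ((-(q : ℂ)) ^ (∑ i, m i) * (∏ i, χ ((m i : ZMod d))) *
        ((qNum q ((∑ i, m i : ℕ) + x) : ℝ) : ℂ) ^ (-s))

/-- The `q`-power sum
`S^{(r)}_{n,i,q}(a|χ) = Σ_{j₁,…,j_r=0}^{a-1} (-1)^{j₁+⋯+j_r} (Π χ(j_l)) q^{(j₁+⋯+j_r)(n-i+1)} [j₁+⋯+j_r]_q^i`. -/
noncomputable def qS (r : ℕ) {d : ℕ} (χ : DirichletCharacter ℂ d)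
    (n i : ℕ) (q : ℝ) (a : ℕ) : ℂ :=
  ∑ j ∈ Fintype.piFinset (fun _ : Fin r => Finset.range a),
    ((-1 : ℂ) ^ (∑ l, j l) * (∏ l, χ ((j l : ZMod d))) *
      (q : ℂ) ^ ((∑ l, j l) * (n - i + 1)) *
      ((qNum q ((∑ l, j l : ℕ)) : ℝ) : ℂ) ^ i)

lemma summable_geom_pi (r : ℕ) (Q : ℝ) (h0 : 0 < Q) (h1 : Q < 1) :
    Summable (fun m : Fin r → ℕ => Q ^ (∑ i, m i)) := by
  induction r with
  | zero => exact Summable.of_finite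
  | succ k ih =>
    rw [← (Fin.consEquiv (fun _ : Fin (k+1) => ℕ)).summable_iff]
    have h := (summable_geometric_of_lt_one h0.le h1).mul_of_nonneg ih
      (fun n => pow_nonneg h0.le n) (fun m => pow_nonneg h0.le _)
    refine h.congr ?_
    rintro ⟨n, m⟩
    simp [Fin.consEquiv, Fin.sum_univ_succ, pow_add]

lemma summable_qEuler (r : ℕ) {d : ℕ} (χ : DirichletCharacter ℂ d) (Q : ℝ)
    (h0 : 0 < Q) (h1 : Q < 1) (n : ℕ) (z : ℝ) :
    Summable (fun m : Fin r → ℕ => ((-(Q : ℂ)) ^ (∑ i, m i) * (∏ i, χ ((m i : ZMod d))) *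
        ((qNum Q ((∑ i, m i : ℕ) + z) : ℝ) : ℂ) ^ n)) := by
  refine Summable.of_norm_bounded
    ((summable_geom_pi r Q h0 h1).mul_right (((1 + Q ^ z) / (1 - Q)) ^ n)) ?_
  intro m
  have hz : 0 < Q ^ z := Real.rpow_pos_of_pos h0 z
  have hprod : ‖∏ i, χ ((m i : ZMod d))‖ ≤ 1 := by
    rw [norm_prod]
    exact Finset.prod_le_one (fun _ _ => norm_nonneg _) (fun i _ => χ.norm_le_one _)
  have hq : |qNum Q ((∑ i, m i : ℕ) + z)| ≤ (1 + Q ^ z) / (1 - Q) := by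
    unfold qNum
    rw [Real.rpow_add h0, Real.rpow_natCast, abs_div, abs_of_pos (sub_pos.2 h1)]
    have hM : Q ^ (∑ i, m i) ≤ 1 := pow_le_one₀ h0.le h1.le
    have hM0 : 0 < Q ^ (∑ i, m i) := pow_pos h0 _
    have := sub_pos.2 h1
    gcongr
    rw [abs_le]
    constructor <;> nlinarith
  rw [norm_mul, norm_mul, norm_pow, norm_pow, norm_neg, Complex.norm_real, Complex.norm_real,
    Real.norm_eq_abs, Real.norm_eq_abs, abs_of_pos h0]
  have h2 : Q ^ (∑ i, m i) * ‖∏ i, χ ((m i : ZMod d))‖ ≤ Q ^ (∑ i, m i) :=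
    mul_le_of_le_one_right (pow_nonneg h0.le _) hprod
  have h3 := pow_le_pow_left₀ (abs_nonneg _) hq n
  exact mul_le_mul h2 h3 (pow_nonneg (abs_nonneg _) _) (pow_nonneg h0.le _)

lemma qNum_add (Q : ℝ) (h0 : 0 < Q) (y z : ℝ) :
    qNum Q (z + y) = qNum Q y + Q ^ y * qNum Q z := by
  unfold qNum
  rw [Real.rpow_add h0]
  ring

lemma qEuler_add (r : ℕ) {d : ℕ} (χ : DirichletCharacter ℂ d) (Q : ℝ)
    (h0 : 0 < Q) (h1 : Q < 1) (n : ℕ) (z y : ℝ) :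
    qEuler r χ Q n (z + y) = ∑ i ∈ Finset.range (n + 1),
      (n.choose i : ℂ) * (qNum Q y : ℂ) ^ i * ((Q ^ y : ℝ) : ℂ) ^ (n - i) *
        qEuler r χ Q (n - i) z := by
  unfold qEuler
  have key : ∀ m : Fin r → ℕ, ((-(Q : ℂ)) ^ (∑ i, m i) * (∏ i, χ ((m i : ZMod d))) *
        ((qNum Q ((∑ i, m i : ℕ) + (z + y)) : ℝ) : ℂ) ^ n) =
      ∑ i ∈ Finset.range (n + 1),
        ((n.choose i : ℂ) * (qNum Q y : ℂ) ^ i * ((Q ^ y : ℝ) : ℂ) ^ (n - i)) *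
        ((-(Q : ℂ)) ^ (∑ i, m i) * (∏ i, χ ((m i : ZMod d))) *
        ((qNum Q ((∑ i, m i : ℕ) + z) : ℝ) : ℂ) ^ (n - i)) := by
    intro m
    rw [← add_assoc, qNum_add Q h0, Complex.ofReal_add, add_pow, Finset.mul_sum]
    refine Finset.sum_congr rfl fun i _ => ?_
    rw [Complex.ofReal_mul, mul_pow]
    ring
  rw [tsum_congr key, Summable.tsum_finsetSum
    (fun i _ => (summable_qEuler r χ Q h0 h1 (n - i) z).mul_left _), Finset.mul_sum]
  refine Finset.sum_congr rfl fun i _ => ?_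
  rw [tsum_mul_left]
  ring

/-- Equation (10): the multiple alternating sum of generalized `q`-Euler polynomials
expressed via `q`-power sums. -/
theorem sum_qEuler_eq_qS (n : ℕ) (a b : ℕ) (ha0 : 0 < a) (ha : Odd a) (hb0 : 0 < b)
    (hb : Odd b) (q : ℝ) (hq0 : 0 < q) (hq1 : q < 1) (x : ℝ)
    (r : ℕ) (hr : 0 < r) (d : ℕ) (hd : Odd d) (χ : DirichletCharacter ℂ d) :
    ∑ j ∈ Fintype.piFinset (fun _ : Fin r => Finset.range (d * a)),
        ((-1 : ℂ) ^ (∑ l, j l) * (q : ℂ) ^ (b * ∑ l, j l) * (∏ l, χ ((j l : ZMod d))) *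
          qEuler r χ (q ^ a) n (b * x + ((b : ℝ) / a) * (∑ l, j l))) =
      ∑ i ∈ Finset.range (n + 1),
        ((n.choose i : ℂ) * (((qNum q b / qNum q a : ℝ)) : ℂ) ^ i *
          qEuler r χ (q ^ a) (n - i) (b * x) * qS r χ n i (q ^ b) (a * d)) := by
  have hQ0 : 0 < q ^ a := pow_pos hq0 a
  have hQ1 : q ^ a < 1 := pow_lt_one₀ hq0.le hq1 ha0.ne'
  have haR : (a : ℝ) ≠ 0 := by exact_mod_cast ha0.ne'
  have hb1 : q ^ b < 1 := pow_lt_one₀ hq0.le hq1 hb0.ne'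
  have e1 : ∀ J : ℕ, (q ^ a) ^ ((b : ℝ) / a * (J : ℝ)) = q ^ (b * J) := by
    intro J
    rw [← Real.rpow_natCast q a, ← Real.rpow_mul hq0.le, ← Real.rpow_natCast]
    congr 1
    push_cast
    field_simp
  have e2 : ∀ J : ℕ, qNum (q ^ a) ((b : ℝ) / a * (J : ℝ)) =
      qNum q b / qNum q a * qNum (q ^ b) (J : ℝ) := by
    intro J
    unfold qNum
    rw [e1, Real.rpow_natCast, Real.rpow_natCast, Real.rpow_natCast, ← pow_mul]
    have h1 : 1 - q ≠ 0 := (sub_pos.2 hq1).ne'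
    have h2 : 1 - q ^ a ≠ 0 := (sub_pos.2 hQ1).ne'
    have h3 : 1 - q ^ b ≠ 0 := (sub_pos.2 hb1).ne'
    field_simp
  unfold qS
  simp_rw [Finset.mul_sum, qEuler_add r χ (q ^ a) hQ0 hQ1, e1, e2, Finset.mul_sum]
  rw [Finset.sum_comm, mul_comm d a]
  refine Finset.sum_congr rfl fun i _ => Finset.sum_congr rfl fun j _ => ?_
  simp only [← Finset.mul_sum]
  generalize (∑ l, j l) = J
  rw [Complex.ofReal_mul, mul_pow]
  push_cast
  ring
end

section
/- For real q with 0<q<1, a positive integer r, a Dirichlet character χ of odd conductor d, nonnegative integers m and n, and real numbers x and y: Σ_{k=0}^{m} C(m,k) q^{k·x} E^{(r)}_{n+k,χ,q}(y) [x]_q^{m-k} = Σ_{k=0}^{n} C(n,k) q^{-k·x} E^{(r)}_{m+k,χ,q}(x+y) [-x]_q^{n-k}, where C(m,k) is the binomial coefficient. -/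
open scoped BigOperators

lemma qe_summable_geom (q : ℝ) (hq0 : 0 < q) (hq1 : q < 1) (r : ℕ) :
    Summable (fun m : Fin r → ℕ => q ^ (∑ i, m i)) := by
  induction r with
  | zero => exact Summable.of_finite
  | succ r ih =>
    have h := (summable_geometric_of_lt_one hq0.le hq1).mul_of_nonneg ih
      (fun n => by positivity) (fun m => by positivity)
    rw [← (Fin.consEquiv (fun _ : Fin (r + 1) => ℕ)).summable_iff]
    refine h.congr ?_
    rintro ⟨a, b⟩
    simp [Fin.consEquiv, Fin.sum_univ_succ, pow_add]

lemma qNum_add_s7 (q : ℝ) (hq0 : 0 < q) (hq1 : q < 1) (x z : ℝ) :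
    qNum q (x + z) = qNum q x + q ^ x * qNum q z := by
  have : 1 - q ≠ 0 := by linarith
  unfold qNum
  rw [Real.rpow_add hq0]
  field_simp
  ring

lemma qe_summable (q : ℝ) (hq0 : 0 < q) (hq1 : q < 1)
    (r : ℕ) (d : ℕ) (χ : DirichletCharacter ℂ d) (n : ℕ) (x : ℝ) :
    Summable (fun m : Fin r → ℕ => 
      ((-(q : ℂ)) ^ (∑ i, m i) * (∏ i, χ ((m i : ZMod d))) *
        ((qNum q ((∑ i, m i : ℕ) + x) : ℝ) : ℂ) ^ n)) := by
  have h := (qe_summable_geom q hq0 hq1 r).mul_right (((1 + q ^ x) / (1 - q)) ^ n)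
  refine Summable.of_norm_bounded h ?_
  intro m
  have h1 : ‖∏ i, χ ((m i : ZMod d))‖ ≤ 1 := by
    rw [norm_prod]
    exact Finset.prod_le_one (fun i _ => norm_nonneg _) (fun i _ => χ.norm_le_one _)
  have hq : 0 < 1 - q := by linarith
  have h2 : |qNum q ((∑ i, m i : ℕ) + x)| ≤ (1 + q ^ x) / (1 - q) := by
    unfold qNum
    rw [abs_div, abs_of_pos hq]
    gcongr
    rw [Real.rpow_add hq0, Real.rpow_natCast]
    have h3 : q ^ (∑ i, m i) ≤ 1 := pow_le_one₀ hq0.le hq1.le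
    have h4 : 0 < q ^ (∑ i, m i) := by positivity
    have h5 : 0 < q ^ x := by positivity
    have h6 := mul_le_mul_of_nonneg_right h3 h5.le
    have h7 := mul_pos h4 h5
    rw [abs_le]
    constructor <;> linarith
  rw [norm_mul, norm_mul, norm_pow, norm_pow, norm_neg, Complex.norm_real, Complex.norm_real,
    Real.norm_of_nonneg hq0.le, Real.norm_eq_abs]
  have h8 : q ^ (∑ i, m i) * ‖∏ i, χ ((m i : ZMod d))‖ ≤ q ^ (∑ i, m i) :=
    mul_le_of_le_one_right (by positivity) h1
  gcongr

/-- One-sided expansion. -/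
lemma qe_expand (q : ℝ) (hq0 : 0 < q) (hq1 : q < 1)
    (r : ℕ) (d : ℕ) (χ : DirichletCharacter ℂ d) (m n : ℕ) (x y : ℝ) :
    ∑ k ∈ Finset.range (m + 1),
        ((m.choose k : ℂ) * ((q ^ ((k : ℝ) * x) : ℝ) : ℂ) * qEuler r χ q (n + k) y *
          ((qNum q x : ℝ) : ℂ) ^ (m - k)) =
    ((qNum q 2 : ℝ) : ℂ) ^ r *
    ∑' j : Fin r → ℕ,
      ((-(q : ℂ)) ^ (∑ i, j i) * (∏ i, χ ((j i : ZMod d))) *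
        (((qNum q ((∑ i, j i : ℕ) + y) : ℝ) : ℂ) ^ n *
          ((qNum q ((∑ i, j i : ℕ) + (x + y)) : ℝ) : ℂ) ^ m)) := by
  have key : ∀ j : Fin r → ℕ,
      ((-(q : ℂ)) ^ (∑ i, j i) * (∏ i, χ ((j i : ZMod d))) *
        (((qNum q ((∑ i, j i : ℕ) + y) : ℝ) : ℂ) ^ n *
          ((qNum q ((∑ i, j i : ℕ) + (x + y)) : ℝ) : ℂ) ^ m)) =
      ∑ k ∈ Finset.range (m + 1),
        ((m.choose k : ℂ) * ((q ^ ((k : ℝ) * x) : ℝ) : ℂ) * ((qNum q x : ℝ) : ℂ) ^ (m - k)) *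
        ((-(q : ℂ)) ^ (∑ i, j i) * (∏ i, χ ((j i : ZMod d))) *
          ((qNum q ((∑ i, j i : ℕ) + y) : ℝ) : ℂ) ^ (n + k)) := by
    intro j
    have e : ((∑ i, j i : ℕ) : ℝ) + (x + y) = x + ((∑ i, j i : ℕ) + y) := by ring
    rw [e, qNum_add_s7 q hq0 hq1 x, Complex.ofReal_add, add_comm (qNum q x : ℂ), add_pow,
      Finset.mul_sum, Finset.mul_sum]
    refine Finset.sum_congr rfl fun k _ => ?_
    rw [mul_comm (k : ℝ) x, Real.rpow_mul hq0.le, Real.rpow_natCast]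
    push_cast
    ring
  simp_rw [key]
  rw [Summable.tsum_finsetSum (fun k _ => (qe_summable q hq0 hq1 r d χ (n + k) y).mul_left _),
    Finset.mul_sum]
  refine Finset.sum_congr rfl fun k _ => ?_
  rw [tsum_mul_left, qEuler]
  ring

/-- Equation (15): a two-parameter recurrence symmetry for the generalized
`q`-Euler polynomials. -/
theorem qEuler_recurrence_symmetry (q : ℝ) (hq0 : 0 < q) (hq1 : q < 1)
    (r : ℕ) (hr : 0 < r) (d : ℕ) (hd : Odd d) (χ : DirichletCharacter ℂ d)
    (m n : ℕ) (x y : ℝ) :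
    ∑ k ∈ Finset.range (m + 1),
        ((m.choose k : ℂ) * ((q ^ ((k : ℝ) * x) : ℝ) : ℂ) * qEuler r χ q (n + k) y *
          ((qNum q x : ℝ) : ℂ) ^ (m - k)) =
    ∑ k ∈ Finset.range (n + 1),
        ((n.choose k : ℂ) * ((q ^ (-(k : ℝ) * x) : ℝ) : ℂ) * qEuler r χ q (m + k) (x + y) *
          ((qNum q (-x) : ℝ) : ℂ) ^ (n - k)) := by
  rw [qe_expand q hq0 hq1 r d χ m n x y]
  have h := qe_expand q hq0 hq1 r d χ n m (-x) (x + y)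
  simp only [neg_add_cancel_left, mul_neg] at h
  simp only [neg_mul]
  rw [h]
  congr 1
  refine tsum_congr fun j => ?_
  ring
end
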